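/- Let G be any group. Suppose that every countable subset of G is contained in some boundedly acyclic subgroup of G. Then G is boundedly acyclic. -/

import Mathlib

open scoped BigOperators

/-- A cochain (function into a normed space) is bounded if its norms are uniformly bounded. -/
def IsBddCochain {G : Type*} {E : Type*} [NormedAddCommGroup E] {n : ℕ}
    (f : (Fin n → G) → E) : Prop :=
  ∃ C : ℝ, ∀ g, ‖f g‖ ≤ C

/-- The inhomogeneous coboundary operator of bounded cohomology, for an action `π` of
`G` on `E`:
`(δf)(g₁,…,g_{n+1}) = g₁•f(g₂,…,g_{n+1}) + ∑_{i=1}^{n} (−1)^i f(g₁,…,g_i·g_{i+1},…,g_{n+1})`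
`+ (−1)^{n+1} f(g₁,…,g_n)`. -/
def bddDelta {G : Type*} [Group G] {E : Type*} [NormedAddCommGroup E] [Module ℝ E]
    (π : G → E → E) (n : ℕ) (f : (Fin n → G) → E) : (Fin (n + 1) → G) → E :=
  fun g =>
    π (g 0) (f (fun j => g j.succ)) +
    (∑ i : Fin n, ((-1 : ℝ) ^ ((i : ℕ) + 1)) •
      f (fun j => if (j : ℕ) < (i : ℕ) then g (Fin.castSucc j)
        else if (j : ℕ) = (i : ℕ) then g (Fin.castSucc j) * g j.succ
        else g j.succ)) +
    ((-1 : ℝ) ^ (n + 1)) • f (fun j => g (Fin.castSucc j))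

/-- Vanishing of the bounded cohomology `Hb^n(G,E)` for all `n ≥ 1`, with respect to the
`G`-action `π` on `E`: every bounded cocycle of degree `n ≥ 1` is the coboundary of a
bounded cochain. -/
def HbVanish {G : Type*} [Group G] {E : Type*} [NormedAddCommGroup E] [Module ℝ E]
    (π : G → E → E) : Prop :=
  ∀ (n : ℕ) (f : (Fin (n + 1) → G) → E), IsBddCochain f →
    bddDelta π (n + 1) f = 0 →
    ∃ b : (Fin n → G) → E, IsBddCochain b ∧ bddDelta π n b = f

/-- A group is boundedly acyclic if `Hb^n(G,ℝ) = 0` for all `n ≥ 1`, where `ℝ` carries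
the trivial `G`-action. -/
def BoundedlyAcyclic (G : Type*) [Group G] : Prop :=
  HbVanish (G := G) (E := ℝ) (fun _ v => v)

/-!
A bounded cocycle on `G` restricts to a coboundary on every boundedly acyclic subgroup, and
extending a primitive by zero shows that on each countable set of tuples it agrees with the
coboundary of a bounded cochain. The bound can then be chosen uniformly over all finite sets of
tuples: otherwise there are finite sets `T N` on which no cochain bounded by `N` works, and
their union is a countable set contradicting the previous sentence. By Tychonoff the cochains
with a given bound form a compact set for pointwise convergence, and having a prescribed
coboundary at a tuple is a closed condition, so the finite solutions yield a global one.
-/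

open Set

section Cochains

variable {G E : Type*} {n : ℕ}

/-- The restriction of a cochain on `G` to a subgroup `H`. -/
def restrictCochain [Group G] (H : Subgroup G) (f : (Fin n → G) → E) : (Fin n → H) → E :=
  fun x => f fun j => x j

/-- The cochain on `G` that agrees with `b` on tuples of elements of the subgroup `H` and
vanishes on all other tuples; it lifts primitives from `H` to `G`. -/
noncomputable def extendCochain [Group G] [Zero E] {H : Subgroup G} (b : (Fin n → H) → E) :
    (Fin n → G) → E :=
  Function.extend (fun x j => (x j : G)) b 0

theorem restrictCochain_extendCochain [Group G] [Zero E] {H : Subgroup G}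
    (b : (Fin n → H) → E) : restrictCochain H (extendCochain b) = b :=
  Function.extend_comp (Subtype.val_injective.comp_left) b 0

variable [Group G] [NormedAddCommGroup E]

theorem IsBddCochain.restrict {f : (Fin n → G) → E} (hf : IsBddCochain f)
    (H : Subgroup G) : IsBddCochain (restrictCochain H f) :=
  hf.imp fun _ hC x => hC fun j => x j

theorem IsBddCochain.extend {H : Subgroup G} {b : (Fin n → H) → E}
    (hb : IsBddCochain b) : IsBddCochain (extendCochain b) := by
  obtain ⟨C, hC⟩ := hb
  have hC₀ : 0 ≤ C := (norm_nonneg _).trans (hC 1)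
  refine ⟨C, fun x => ?_⟩
  by_cases hx : ∃ y : Fin n → H, (fun j => (y j : G)) = x
  · obtain ⟨y, rfl⟩ := hx
    exact (congrArg norm (congrFun (restrictCochain_extendCochain b) y)).trans_le (hC y)
  · rw [extendCochain, Function.extend_apply' _ _ _ hx, Pi.zero_apply, norm_zero]
    exact hC₀

section Coboundary

variable [Module ℝ E]

theorem bddDelta_restrictCochain (π : G → E → E) (H : Subgroup G) (f : (Fin n → G) → E) :
    bddDelta (fun h : H => π h) n (restrictCochain H f) =
      restrictCochain H (bddDelta π n f) := by
  funext g
  simp only [bddDelta, restrictCochain, apply_ite (Subtype.val : H → G), Subgroup.coe_mul]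

variable {π : G → E → E}

theorem bddDelta_extendCochain_eqOn {f : (Fin (n + 1) → G) → E} {H : Subgroup G}
    {b : (Fin n → H) → E} (hb : bddDelta (fun h : H => π h) n b = restrictCochain H f) :
    EqOn (bddDelta π n (extendCochain b)) f {g | ∀ j, g j ∈ H} := by
  intro g hg
  have hres : restrictCochain H (bddDelta π n (extendCochain b)) = restrictCochain H f := by
    rw [← bddDelta_restrictCochain, restrictCochain_extendCochain, hb]
  exact congrFun hres fun j => ⟨g j, hg j⟩

theorem exists_bound_forall_finset_bddDelta_eqOn {f : (Fin (n + 1) → G) → E}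
    (hf : ∀ S : Set (Fin (n + 1) → G), S.Countable →
      ∃ b : (Fin n → G) → E, IsBddCochain b ∧ EqOn (bddDelta π n b) f S) :
    ∃ r : ℝ, ∀ T : Finset (Fin (n + 1) → G),
      ∃ b : (Fin n → G) → E, (∀ x, ‖b x‖ ≤ r) ∧ EqOn (bddDelta π n b) f T := by
  by_contra! hunbounded
  choose T hT using hunbounded
  obtain ⟨b, ⟨C, hC⟩, hb⟩ := hf (⋃ N : ℕ, T N) (countable_iUnion fun N => (T N).countable_toSet)
  obtain ⟨N, hN⟩ := exists_nat_ge C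
  exact hT N b (fun x => (hC x).trans hN) (hb.mono (subset_iUnion_of_subset N subset_rfl))

end Coboundary

variable [NormedSpace ℝ E] {π : G → E → E}

theorem continuous_bddDelta_apply (hπ : ∀ g, Continuous (π g)) (g : Fin (n + 1) → G) :
    Continuous fun f : (Fin n → G) → E => bddDelta π n f g := by
  unfold bddDelta
  fun_prop

theorem exists_bddDelta_eq_of_forall_finset [ProperSpace E] (hπ : ∀ g, Continuous (π g))
    {f : (Fin (n + 1) → G) → E} {r : ℝ}
    (hf : ∀ T : Finset (Fin (n + 1) → G),
      ∃ b : (Fin n → G) → E, (∀ x, ‖b x‖ ≤ r) ∧ EqOn (bddDelta π n b) f T) :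
    ∃ b : (Fin n → G) → E, (∀ x, ‖b x‖ ≤ r) ∧ bddDelta π n b = f := by
  let K : Set ((Fin n → G) → E) := univ.pi fun _ => Metric.closedBall 0 r
  have mem_K {b : (Fin n → G) → E} : b ∈ K ↔ ∀ x, ‖b x‖ ≤ r := by
    simp only [K, mem_univ_pi, mem_closedBall_zero_iff]
  have hK : IsCompact K := isCompact_univ_pi fun _ => isCompact_closedBall _ _
  obtain ⟨b, hbK, hb⟩ := hK.inter_iInter_nonempty (fun g => {b | bddDelta π n b g = f g})
    (fun g => isClosed_eq (continuous_bddDelta_apply hπ g) continuous_const)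
    (fun T => (hf T).imp fun b hb => ⟨mem_K.2 hb.1, mem_iInter₂.2 hb.2⟩)
  exact ⟨b, mem_K.1 hbK, funext (mem_iInter.1 hb)⟩

theorem boundedlyAcyclic_from_countable_subgroups_general [ProperSpace E]
    (hπ : ∀ g, Continuous (π g))
    (h : ∀ C : Set G, C.Countable →
      ∃ H : Subgroup G, C ⊆ H ∧ HbVanish fun g : H => π g) :
    HbVanish π := by
  intro n f hf hδ
  have hcountable (S : Set (Fin (n + 1) → G)) (hS : S.Countable) :
      ∃ b : (Fin n → G) → E, IsBddCochain b ∧ EqOn (bddDelta π n b) f S := by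
    obtain ⟨H, hSH, hH⟩ := h (⋃ g ∈ S, range g) (hS.biUnion fun g _ => countable_range g)
    have hcocycle : bddDelta (fun g : H => π g) (n + 1) (restrictCochain H f) = 0 := by
      rw [bddDelta_restrictCochain, hδ]
      rfl
    obtain ⟨b, hb, hbf⟩ := hH n _ (hf.restrict H) hcocycle
    exact ⟨extendCochain b, hb.extend, (bddDelta_extendCochain_eqOn hbf).mono
      fun g hg j => hSH (mem_biUnion hg (mem_range_self j))⟩
  obtain ⟨r, hr⟩ := exists_bound_forall_finset_bddDelta_eqOn hcountable
  obtain ⟨b, hb, hbf⟩ := exists_bddDelta_eq_of_forall_finset hπ hr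
  exact ⟨b, ⟨r, hb⟩, hbf⟩

end Cochains

/-- If every countable subset of `G` is contained in some boundedly
acyclic subgroup of `G`, then `G` is boundedly acyclic. -/
theorem boundedlyAcyclic_from_countable_subgroups
    {G : Type*} [Group G]
    (h : ∀ C : Set G, C.Countable → ∃ G₁ : Subgroup G, C ⊆ G₁ ∧ BoundedlyAcyclic G₁) :
    BoundedlyAcyclic G :=
  boundedlyAcyclic_from_countable_subgroups_general (fun _ => continuous_id) h
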